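/- Any billiard trajectory in the polyhedral cone Q experiences at most n!·(4/λ_min)^(n−1) reflections; that is, if p₁,…,p_N, v₀,…,v_N, i₁,…,i_N form a billiard trajectory in Q with N reflections, then N ≤ n!·(4/λ_min)^(n−1). -/

import Mathlib

open RealInnerProductSpace

/-!
Decompose the velocity change `v N - v 0` into the wall normals: the coefficients are the total
impulses received from the walls, so a lower Riesz bound `lam` for the normals bounds the sum
of all impulses by `2 √(n / lam) ‖v 0‖`. Conversely, after projecting the velocities onto the span
of the normals, some normal satisfies `‖v s‖ ≤ √(n / lam) |⟪v s, α i⟫|`, and hitting wall `i` after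
time `s` reverses the sign of `⟪v, α i⟫`; hence a time window in which every wall is hit has total
impulse at least `‖v 0‖ / √(n / lam)`, and there are at most `2 n / lam` disjoint such windows.
A window missing a wall is a trajectory for `n - 1` walls, so its length is bounded by induction
on `n`. The induction starts at `n = 2`, where the general window bound would be just too weak:
there any two consecutive reflections have at least twice the impulse it provides.
-/

lemma nsmul_le_sum_range_of_forall_window {M : Type*} [AddCommMonoid M] [PartialOrder M]
    [IsOrderedAddMonoid M] {a : ℕ → M} {N L : ℕ} {δ : M} (ha : ∀ k < N, 0 ≤ a k)
    (h : ∀ s, s + L ≤ N → δ ≤ ∑ k ∈ Finset.Ico s (s + L), a k) :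
    (N / L) • δ ≤ ∑ k ∈ Finset.range N, a k := by
  have hblocks (K : ℕ) (hK : K * L ≤ N) : K • δ ≤ ∑ k ∈ Finset.range (K * L), a k := by
    induction K with
    | zero => simp
    | succ K ih =>
      rw [Nat.succ_mul] at hK ⊢
      rw [succ_nsmul, ← Finset.sum_range_add_sum_Ico _ (Nat.le_add_right _ L)]
      exact add_le_add (ih (by omega)) (h _ hK)
  have hle : N / L * L ≤ N := Nat.div_mul_le_self N L
  exact (hblocks _ hle).trans <| Finset.sum_le_sum_of_subset_of_nonneg
    (Finset.range_mono hle) fun k hk _ ↦ ha k (Finset.mem_range.1 hk)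

open scoped MatrixOrder Matrix in
lemma smul_one_le_of_forall_eigenvalue_ge {ι : Type*} [Fintype ι] [DecidableEq ι]
    {A : Matrix ι ι ℝ} (hA : A.IsHermitian) {lam : ℝ}
    (h : ∀ (μ : ℝ) (ξ : ι → ℝ), ξ ≠ 0 → A *ᵥ ξ = μ • ξ → lam ≤ μ) :
    lam • 1 ≤ A := by
  rw [← Algebra.algebraMap_eq_smul_one, algebraMap_le_iff_le_spectrum (ha := hA.isSelfAdjoint)]
  intro μ hμ
  rw [← Matrix.spectrum_toLin', ← Module.End.hasEigenvalue_iff_mem_spectrum] at hμ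
  obtain ⟨ξ, hξ⟩ := hμ.exists_hasEigenvector
  exact h μ ξ hξ.2 (by simpa using hξ.apply_eq_smul)

variable {ι E : Type*} [NormedAddCommGroup E] [InnerProductSpace ℝ E]

/-- `lam` is a lower Riesz bound of the family `α`: a positive constant with
`lam * ∑ ξ i ^ 2 ≤ ‖∑ ξ i • α i‖ ^ 2` for all finitely supported coefficients. For a finite
linearly independent family, the best one is the least eigenvalue of the Gram matrix. -/
structure IsLowerRieszBound (α : ι → E) (lam : ℝ) : Prop where
  pos : 0 < lam
  mul_sum_sq_le (S : Finset ι) (ξ : ι → ℝ) :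
    lam * ∑ i ∈ S, ξ i ^ 2 ≤ ‖∑ i ∈ S, ξ i • α i‖ ^ 2

open scoped Matrix in
lemma eigenvalue_gram_pos [Fintype ι] {α : ι → E} (hα : LinearIndependent ℝ α) {lam : ℝ}
    {ξ : ι → ℝ} (hξ : ξ ≠ 0) (h : Matrix.gram ℝ α *ᵥ ξ = lam • ξ) : 0 < lam := by
  have hpos := (Matrix.posDef_gram_of_linearIndependent hα).dotProduct_mulVec_pos hξ
  rw [h, dotProduct_smul, smul_eq_mul, star_trivial] at hpos
  exact pos_of_mul_pos_left hpos (dotProduct_self_star_nonneg ξ)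

open scoped MatrixOrder Matrix in
lemma isLowerRieszBound_of_isLeast_eigenvalue_gram [Fintype ι] {α : ι → E}
    (hα : LinearIndependent ℝ α) {lam : ℝ}
    (hEig : ∃ ξ : ι → ℝ, ξ ≠ 0 ∧ Matrix.gram ℝ α *ᵥ ξ = lam • ξ)
    (hMin : ∀ (μ : ℝ) (ξ : ι → ℝ), ξ ≠ 0 → Matrix.gram ℝ α *ᵥ ξ = μ • ξ → lam ≤ μ) :
    IsLowerRieszBound α lam := by
  classical
  obtain ⟨ξ₀, hξ₀, hlam⟩ := hEig
  refine ⟨eigenvalue_gram_pos hα hξ₀ hlam, fun S ξ ↦ ?_⟩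
  have hle : lam • 1 ≤ Matrix.gram ℝ α :=
    smul_one_le_of_forall_eigenvalue_ge (Matrix.isHermitian_gram ℝ α) hMin
  have huniv (η : ι → ℝ) : lam * ∑ i, η i ^ 2 ≤ ‖∑ i, η i • α i‖ ^ 2 := by
    have hη := (Matrix.le_iff.1 hle).dotProduct_mulVec_nonneg η
    rw [Matrix.sub_mulVec, dotProduct_sub, Matrix.star_dotProduct_gram_mulVec,
      real_inner_self_eq_norm_sq, Matrix.smul_mulVec, Matrix.one_mulVec, dotProduct_smul,
      smul_eq_mul, star_trivial, sub_nonneg] at hη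
    simpa only [dotProduct, pow_two] using hη
  simpa [ite_smul, ite_pow, Finset.sum_ite_mem] using huniv fun i ↦ if i ∈ S then ξ i else 0

namespace IsLowerRieszBound

variable {α : ι → E} {lam : ℝ} {S : Finset ι}

lemma le_norm_sq (hR : IsLowerRieszBound α lam) (i : ι) : lam ≤ ‖α i‖ ^ 2 := by
  simpa using hR.mul_sum_sq_le {i} 1

lemma mul_norm_sq_le_sum_inner_sq (hR : IsLowerRieszBound α lam) {u : E}
    (hu : u ∈ Submodule.span ℝ (α '' S)) : lam * ‖u‖ ^ 2 ≤ ∑ i ∈ S, ⟪u, α i⟫ ^ 2 := by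
  obtain ⟨ξ, hξ⟩ := (Submodule.mem_span_image_finset_iff_exists_fun' ℝ).1 hu
  obtain rfl | hu0 := eq_or_ne u 0
  · simp
  have hnorm : ‖u‖ ^ 2 = ∑ i ∈ S, ξ i * ⟪u, α i⟫ := by
    rw [← real_inner_self_eq_norm_sq]
    nth_rewrite 2 [← hξ]
    simp only [inner_sum, real_inner_smul_right]
  have hpos : 0 < ‖u‖ ^ 2 := by positivity
  refine le_of_mul_le_mul_left ?_ hpos
  calc ‖u‖ ^ 2 * (lam * ‖u‖ ^ 2) = lam * (∑ i ∈ S, ξ i * ⟪u, α i⟫) ^ 2 := by rw [← hnorm]; ring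
    _ ≤ lam * ((∑ i ∈ S, ξ i ^ 2) * ∑ i ∈ S, ⟪u, α i⟫ ^ 2) := by
      gcongr
      · exact hR.pos.le
      · exact Finset.sum_mul_sq_le_sq_mul_sq S ξ _
    _ = (lam * ∑ i ∈ S, ξ i ^ 2) * ∑ i ∈ S, ⟪u, α i⟫ ^ 2 := by ring
    _ ≤ ‖u‖ ^ 2 * ∑ i ∈ S, ⟪u, α i⟫ ^ 2 := by
      gcongr
      exact hξ ▸ hR.mul_sum_sq_le S ξ

lemma exists_norm_le_sqrt_mul_abs_inner (hR : IsLowerRieszBound α lam) (hS : S.Nonempty) {u : E}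
    (hu : u ∈ Submodule.span ℝ (α '' S)) :
    ∃ i ∈ S, ‖u‖ ≤ √(S.card / lam) * |⟪u, α i⟫| := by
  have hcard : (0 : ℝ) < S.card := by exact_mod_cast hS.card_pos
  obtain ⟨i, hi, hle⟩ : ∃ i ∈ S, lam * ‖u‖ ^ 2 / S.card ≤ ⟪u, α i⟫ ^ 2 := by
    refine Finset.exists_le_of_sum_le hS ?_
    rw [Finset.sum_const, nsmul_eq_mul, mul_div_cancel₀ _ hcard.ne']
    exact hR.mul_norm_sq_le_sum_inner_sq hu
  refine ⟨i, hi, ?_⟩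
  rw [← Real.sqrt_sq_eq_abs, ← Real.sqrt_mul (div_nonneg hcard.le hR.pos.le)]
  apply Real.le_sqrt_of_sq_le
  rw [div_le_iff₀ hcard] at hle
  rw [div_mul_eq_mul_div, le_div_iff₀ hR.pos]
  linarith

lemma sum_le_sqrt_mul_norm_sum (hR : IsLowerRieszBound α lam) (ξ : ι → ℝ) :
    ∑ i ∈ S, ξ i ≤ √(S.card / lam) * ‖∑ i ∈ S, ξ i • α i‖ := by
  have hlam := hR.pos
  rw [← Real.sqrt_sq (norm_nonneg (∑ i ∈ S, ξ i • α i)), ← Real.sqrt_mul (by positivity)]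
  apply Real.le_sqrt_of_sq_le
  calc (∑ i ∈ S, ξ i) ^ 2 ≤ S.card * ∑ i ∈ S, ξ i ^ 2 := sq_sum_le_card_mul_sum_sq
    _ = S.card / lam * (lam * ∑ i ∈ S, ξ i ^ 2) := by field_simp
    _ ≤ S.card / lam * ‖∑ i ∈ S, ξ i • α i‖ ^ 2 := by
      gcongr
      exact hR.mul_sum_sq_le S ξ

lemma sum_le_sqrt_mul_norm_sum_of_mapsTo {κ : Type*} (hR : IsLowerRieszBound α lam)
    {T : Finset κ} {f : κ → ι} (hf : ∀ k ∈ T, f k ∈ S) (a : κ → ℝ) :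
    ∑ k ∈ T, a k ≤ √(S.card / lam) * ‖∑ k ∈ T, a k • α (f k)‖ := by
  classical
  have hfiber (i : ι) :
      ∑ k ∈ T with f k = i, a k • α (f k) = (∑ k ∈ T with f k = i, a k) • α i := by
    rw [Finset.sum_smul]
    exact Finset.sum_congr rfl fun k hk ↦ by rw [(Finset.mem_filter.1 hk).2]
  have hle := hR.sum_le_sqrt_mul_norm_sum (S := S) fun i ↦ ∑ k ∈ T with f k = i, a k
  simpa only [← hfiber, Finset.sum_fiberwise_of_maps_to hf] using hle

end IsLowerRieszBound

/-- The velocity history of a billiard trajectory with `N` reflections in the walls with normals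
`α i`, `i ∈ S`, forgetting the positions. The `k`-th reflection, `k < N`, takes place at the wall
`idx k` and turns `v k` into `v (k + 1)`; later values of `v` and `idx` are unconstrained. -/
structure IsReflectionSequence (α : ι → E) (S : Finset ι) (N : ℕ) (v : ℕ → E) (idx : ℕ → ι) :
    Prop where
  mem : ∀ k < N, idx k ∈ S
  inner_neg : ∀ k < N, ⟪v k, α (idx k)⟫ < 0
  succ_eq : ∀ k < N, v (k + 1) = v k - (2 * ⟪v k, α (idx k)⟫) • α (idx k)

/-- The impulse transferred at the `k`-th reflection: the coefficient of the wall normal in the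
velocity jump `v (k + 1) - v k`. -/
noncomputable def impulse (α : ι → E) (v : ℕ → E) (idx : ℕ → ι) (k : ℕ) : ℝ :=
  -2 * ⟪v k, α (idx k)⟫

namespace IsReflectionSequence

variable {α : ι → E} {S : Finset ι} {N : ℕ} {v : ℕ → E} {idx : ℕ → ι} {lam : ℝ}

lemma slice (h : IsReflectionSequence α S N v idx) {s L : ℕ} (hs : s + L ≤ N) {S' : Finset ι}
    (hS' : ∀ k < L, idx (s + k) ∈ S') :
    IsReflectionSequence α S' L (fun k ↦ v (s + k)) (fun k ↦ idx (s + k)) where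
  mem := hS'
  inner_neg k hk := h.inner_neg (s + k) (by omega)
  succ_eq k hk := h.succ_eq (s + k) (by omega)

lemma starProjection (h : IsReflectionSequence α S N v idx) (W : Submodule ℝ E)
    [W.HasOrthogonalProjection] (hW : ∀ i ∈ S, α i ∈ W) :
    IsReflectionSequence α S N (fun k ↦ W.starProjection (v k)) idx := by
  have hfix {k : ℕ} (hk : k < N) : W.starProjection (α (idx k)) = α (idx k) :=
    Submodule.starProjection_eq_self_iff.2 (hW _ (h.mem k hk))
  have hinner {k : ℕ} (hk : k < N) :
      ⟪W.starProjection (v k), α (idx k)⟫ = ⟪v k, α (idx k)⟫ := by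
    rw [Submodule.inner_starProjection_left_eq_right, hfix hk]
  refine ⟨h.mem, fun k hk ↦ ?_, fun k hk ↦ ?_⟩
  · rw [hinner hk]
    exact h.inner_neg k hk
  · rw [hinner hk, h.succ_eq k hk, map_sub, map_smul, hfix hk]

lemma exists_forall_mem_span (h : IsReflectionSequence α S N v idx) :
    ∃ u : ℕ → E, IsReflectionSequence α S N u idx ∧ ∀ k, u k ∈ Submodule.span ℝ (α '' S) := by
  have : FiniteDimensional ℝ (Submodule.span ℝ (α '' S)) :=
    FiniteDimensional.span_of_finite ℝ (S.finite_toSet.image α)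
  exact ⟨_, h.starProjection _ fun i hi ↦ Submodule.subset_span (Set.mem_image_of_mem α hi),
    fun k ↦ Submodule.starProjection_apply_mem _ (v k)⟩

lemma impulse_pos (h : IsReflectionSequence α S N v idx) {k : ℕ} (hk : k < N) :
    0 < impulse α v idx k :=
  mul_pos_of_neg_of_neg (by norm_num) (h.inner_neg k hk)

lemma succ_sub_eq (h : IsReflectionSequence α S N v idx) {k : ℕ} (hk : k < N) :
    v (k + 1) - v k = impulse α v idx k • α (idx k) := by
  rw [h.succ_eq k hk, sub_sub_cancel_left, ← neg_smul, impulse, neg_mul]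

lemma sum_impulse_smul (h : IsReflectionSequence α S N v idx) :
    ∑ k ∈ Finset.range N, impulse α v idx k • α (idx k) = v N - v 0 := by
  rw [← Finset.sum_range_sub]
  exact Finset.sum_congr rfl fun k hk ↦ (h.succ_sub_eq (Finset.mem_range.1 hk)).symm

lemma norm_zero_pos (h : IsReflectionSequence α S N v idx) (hN : 0 < N) : 0 < ‖v 0‖ := by
  refine norm_pos_iff.2 fun h0 ↦ (h.inner_neg 0 hN).ne ?_
  rw [h0, inner_zero_left]

lemma inner_succ (h : IsReflectionSequence α S N v idx) (hα : ∀ i, ‖α i‖ = 1) {k : ℕ}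
    (hk : k < N) : ⟪v (k + 1), α (idx k)⟫ = -⟪v k, α (idx k)⟫ := by
  rw [h.succ_eq k hk, inner_sub_left, real_inner_smul_left, real_inner_self_eq_norm_sq, hα]
  ring

lemma idx_succ_ne (h : IsReflectionSequence α S N v idx) (hα : ∀ i, ‖α i‖ = 1) {k : ℕ}
    (hk : k + 1 < N) : idx (k + 1) ≠ idx k := by
  intro heq
  have hneg := h.inner_neg (k + 1) hk
  rw [heq, h.inner_succ hα (by omega)] at hneg
  linarith [h.inner_neg k (by omega)]

lemma norm_eq (h : IsReflectionSequence α S N v idx) (hα : ∀ i, ‖α i‖ = 1) {k : ℕ} (hk : k ≤ N) :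
    ‖v k‖ = ‖v 0‖ := by
  induction k with
  | zero => rfl
  | succ k ih =>
    rw [← ih (by omega), ← sq_eq_sq₀ (norm_nonneg _) (norm_nonneg _), h.succ_eq k hk,
      norm_sub_sq_real, norm_smul, hα, real_inner_smul_right, Real.norm_eq_abs, mul_one, sq_abs]
    ring

lemma norm_sub_le_sum_impulse (h : IsReflectionSequence α S N v idx) (hα : ∀ i, ‖α i‖ = 1)
    {a b : ℕ} (hab : a ≤ b) (hb : b ≤ N) :
    ‖v b - v a‖ ≤ ∑ k ∈ Finset.Ico a b, impulse α v idx k := by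
  rw [← dist_eq_norm']
  refine dist_le_Ico_sum_of_dist_le hab fun {k} _ hk ↦ ?_
  rw [dist_eq_norm', h.succ_sub_eq (by omega), norm_smul, hα, mul_one,
    Real.norm_of_nonneg (h.impulse_pos (by omega)).le]

lemma abs_inner_sub_inner_le_sum_impulse (h : IsReflectionSequence α S N v idx)
    (hα : ∀ i, ‖α i‖ = 1) {a b c : ℕ} (hac : a ≤ c) (hcb : c ≤ b) (hb : b ≤ N) (i : ι) :
    |⟪v c, α i⟫ - ⟪v a, α i⟫| ≤ ∑ k ∈ Finset.Ico a b, impulse α v idx k := by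
  calc |⟪v c, α i⟫ - ⟪v a, α i⟫| ≤ ‖v c - v a‖ := by
        simpa only [inner_sub_left, hα, mul_one] using abs_real_inner_le_norm (v c - v a) (α i)
    _ ≤ ∑ k ∈ Finset.Ico a c, impulse α v idx k := h.norm_sub_le_sum_impulse hα hac (hcb.trans hb)
    _ ≤ ∑ k ∈ Finset.Ico a b, impulse α v idx k :=
      Finset.sum_le_sum_of_subset_of_nonneg (Finset.Ico_subset_Ico_right hcb) fun k hk _ ↦
        (h.impulse_pos ((Finset.mem_Ico.1 hk).2.trans_le hb)).le

-- The reflection in `idx k` moves `⟪v, α (idx k)⟫` from negative to positive, so on one of its two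
-- sides this inner product has the opposite sign to `⟪v a, α (idx k)⟫`.
lemma abs_inner_le_sum_impulse (h : IsReflectionSequence α S N v idx) (hα : ∀ i, ‖α i‖ = 1)
    {a b k : ℕ} (hak : a ≤ k) (hkb : k < b) (hb : b ≤ N) :
    |⟪v a, α (idx k)⟫| ≤ ∑ j ∈ Finset.Ico a b, impulse α v idx j := by
  have hneg := h.inner_neg k (by omega)
  have hbefore := abs_le.1 (h.abs_inner_sub_inner_le_sum_impulse hα hak hkb.le hb (idx k))
  have hafter := abs_le.1
    (h.abs_inner_sub_inner_le_sum_impulse hα (Nat.le_succ_of_le hak) hkb hb (idx k))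
  rw [h.inner_succ hα (by omega)] at hafter
  exact abs_le.2 ⟨by linarith, by linarith⟩

lemma sum_impulse_le (h : IsReflectionSequence α S N v idx) (hα : ∀ i, ‖α i‖ = 1)
    (hR : IsLowerRieszBound α lam) :
    ∑ k ∈ Finset.range N, impulse α v idx k ≤ √(S.card / lam) * (2 * ‖v 0‖) := by
  have hle := hR.sum_le_sqrt_mul_norm_sum_of_mapsTo
    (fun k hk ↦ h.mem k (Finset.mem_range.1 hk)) (impulse α v idx)
  rw [h.sum_impulse_smul] at hle
  have hnorm : ‖v N - v 0‖ ≤ 2 * ‖v 0‖ := by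
    linarith [norm_sub_le (v N) (v 0), h.norm_eq hα le_rfl]
  exact hle.trans (by gcongr)

lemma norm_le_sqrt_mul_sum_impulse (h : IsReflectionSequence α S N v idx) (hα : ∀ i, ‖α i‖ = 1)
    (hR : IsLowerRieszBound α lam) (hS : S.Nonempty) {a b : ℕ} (hab : a ≤ b) (hb : b ≤ N)
    (hv : v a ∈ Submodule.span ℝ (α '' S)) (hhit : ∀ i ∈ S, ∃ k ∈ Finset.Ico a b, idx k = i) :
    ‖v 0‖ ≤ √(S.card / lam) * ∑ k ∈ Finset.Ico a b, impulse α v idx k := by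
  obtain ⟨i, hi, hle⟩ := hR.exists_norm_le_sqrt_mul_abs_inner hS hv
  rw [h.norm_eq hα (hab.trans hb)] at hle
  obtain ⟨k, hk, rfl⟩ := hhit i hi
  rw [Finset.mem_Ico] at hk
  exact hle.trans (by gcongr; exact h.abs_inner_le_sum_impulse hα hk.1 hk.2 hb)

lemma two_mul_norm_le_sqrt_mul_impulse_add_impulse (h : IsReflectionSequence α S N v idx)
    (hα : ∀ i, ‖α i‖ = 1) (hR : IsLowerRieszBound α lam) (hS : S.card = 2) {s : ℕ}
    (hs : s + 2 ≤ N) (hv : v (s + 1) ∈ Submodule.span ℝ (α '' S)) :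
    2 * ‖v 0‖ ≤ √(S.card / lam) * (impulse α v idx s + impulse α v idx (s + 1)) := by
  classical
  have hne : idx s ≠ idx (s + 1) := (h.idx_succ_ne hα (by omega)).symm
  have hS_eq : {idx s, idx (s + 1)} = S := by
    refine Finset.eq_of_subset_of_card_le ?_ (by rw [hS, Finset.card_pair hne])
    simp [Finset.insert_subset_iff, h.mem s (by omega), h.mem (s + 1) (by omega)]
  set x := impulse α v idx s with hx
  set y := impulse α v idx (s + 1) with hy
  have hx_pos : 0 < x := h.impulse_pos (by omega)
  have hy_pos : 0 < y := h.impulse_pos (by omega)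
  have hsum : ∑ i ∈ S, ⟪v (s + 1), α i⟫ ^ 2 = (x ^ 2 + y ^ 2) / 4 := by
    rw [← hS_eq, Finset.sum_pair hne, h.inner_succ hα (by omega), hx, hy, impulse, impulse]
    ring
  have hnorm : 4 * (lam * ‖v 0‖ ^ 2) ≤ x ^ 2 + y ^ 2 := by
    have hle := hR.mul_norm_sq_le_sum_inner_sq hv
    rw [hsum, h.norm_eq hα (by omega)] at hle
    linarith
  have hlam := hR.pos
  rw [← Real.sqrt_sq (add_pos hx_pos hy_pos).le, ← Real.sqrt_mul (by positivity)]
  apply Real.le_sqrt_of_sq_le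
  rw [hS, div_mul_eq_mul_div, le_div_iff₀ hlam]
  calc (2 * ‖v 0‖) ^ 2 * lam = 4 * (lam * ‖v 0‖ ^ 2) := by ring
    _ ≤ x ^ 2 + y ^ 2 := hnorm
    _ ≤ (2 : ℕ) * (x + y) ^ 2 := by
      push_cast
      nlinarith [mul_pos hx_pos hy_pos]

lemma div_mul_le_of_forall_window (h : IsReflectionSequence α S N v idx) (hα : ∀ i, ‖α i‖ = 1)
    (hR : IsLowerRieszBound α lam) {L : ℕ} {x : ℝ}
    (hx : ∀ s, s + L ≤ N →
      x * ‖v 0‖ ≤ √(S.card / lam) * ∑ k ∈ Finset.Ico s (s + L), impulse α v idx k) :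
    (N / L : ℕ) * x ≤ 2 * S.card / lam := by
  have hlam := hR.pos
  obtain rfl | hN := N.eq_zero_or_pos
  · simp only [Nat.zero_div, Nat.cast_zero, zero_mul]
    positivity
  refine le_of_mul_le_mul_right ?_ (h.norm_zero_pos hN)
  simp only [Finset.mul_sum] at hx
  calc (N / L : ℕ) * x * ‖v 0‖ = (N / L) • (x * ‖v 0‖) := by rw [nsmul_eq_mul, mul_assoc]
    _ ≤ ∑ k ∈ Finset.range N, √(S.card / lam) * impulse α v idx k :=
      nsmul_le_sum_range_of_forall_window
        (fun k hk ↦ mul_nonneg (Real.sqrt_nonneg _) (h.impulse_pos hk).le) hx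
    _ = √(S.card / lam) * ∑ k ∈ Finset.range N, impulse α v idx k := (Finset.mul_sum ..).symm
    _ ≤ √(S.card / lam) * (√(S.card / lam) * (2 * ‖v 0‖)) := by
      gcongr
      exact h.sum_impulse_le hα hR
    _ = 2 * S.card / lam * ‖v 0‖ := by
      rw [← mul_assoc, Real.mul_self_sqrt (by positivity)]
      ring

lemma length_le_card_of_card_le_one (h : IsReflectionSequence α S N v idx)
    (hα : ∀ i, ‖α i‖ = 1) (hS : S.card ≤ 1) : N ≤ S.card := by
  obtain rfl | hN := N.eq_zero_or_pos
  · exact S.card.zero_le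
  have hN1 : N ≤ 1 := by
    by_contra! hN2
    exact h.idx_succ_ne hα hN2 (Finset.card_le_one.1 hS _ (h.mem 1 hN2) _ (h.mem 0 hN))
  exact hN1.trans (Finset.card_pos.2 ⟨_, h.mem 0 hN⟩)

lemma length_le_of_card_eq_two (h : IsReflectionSequence α S N v idx) (hα : ∀ i, ‖α i‖ = 1)
    (hR : IsLowerRieszBound α lam) (hS : S.card = 2) : (N : ℝ) ≤ 4 / lam + 1 := by
  obtain ⟨u, hu, hspan⟩ := h.exists_forall_mem_span
  have hcount : ((N / 2 : ℕ) : ℝ) * 2 ≤ 2 * S.card / lam :=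
    hu.div_mul_le_of_forall_window hα hR fun s hs ↦ by
      rw [Finset.sum_Ico_succ_top (by omega), Nat.Ico_succ_singleton, Finset.sum_singleton]
      exact hu.two_mul_norm_le_sqrt_mul_impulse_add_impulse hα hR hS hs (hspan _)
  have hN : (N : ℝ) ≤ (N / 2 : ℕ) * 2 + 1 := by exact_mod_cast (by omega : N ≤ N / 2 * 2 + 1)
  have hfour : 2 * (S.card : ℝ) / lam = 4 / lam := by rw [hS]; norm_num
  linarith

lemma length_add_one_le_mul [DecidableEq ι] (h : IsReflectionSequence α S N v idx)
    (hα : ∀ i, ‖α i‖ = 1) (hR : IsLowerRieszBound α lam) (hS : S.Nonempty) {B : ℝ}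
    (hB : ∀ i ∈ S, ∀ (M : ℕ) (w : ℕ → E) (jdx : ℕ → ι),
      IsReflectionSequence α (S.erase i) M w jdx → (M : ℝ) + 1 ≤ B) :
    (N : ℝ) + 1 ≤ B * (2 * S.card / lam + 1) := by
  have hB1 : 1 ≤ B := by
    obtain ⟨i, hi⟩ := hS
    simpa using hB i hi 0 _ _ (h.slice (s := 0) (L := 0) (by omega) (by simp))
  obtain ⟨u, hu, hspan⟩ := h.exists_forall_mem_span
  have hhit (s : ℕ) (hs : s + ⌊B⌋₊ ≤ N) :
      ∀ i ∈ S, ∃ k ∈ Finset.Ico s (s + ⌊B⌋₊), idx k = i := by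
    by_contra! ⟨i, hi, hmiss⟩
    have hslice := h.slice hs (S' := S.erase i) fun k hk ↦
      Finset.mem_erase.2 ⟨hmiss _ (Finset.mem_Ico.2 (by omega)), h.mem _ (by omega)⟩
    exact (hB i hi _ _ _ hslice).not_gt (Nat.lt_floor_add_one B)
  have hcount : ((N / ⌊B⌋₊ : ℕ) : ℝ) * 1 ≤ 2 * S.card / lam :=
    hu.div_mul_le_of_forall_window hα hR fun s hs ↦ by
      rw [one_mul]
      exact hu.norm_le_sqrt_mul_sum_impulse hα hR hS (by omega) hs (hspan s) (hhit s hs)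
  rw [mul_one] at hcount
  calc (N : ℝ) + 1 ≤ ⌊B⌋₊ * ((N / ⌊B⌋₊ : ℕ) + 1) := by
        exact_mod_cast Nat.lt_mul_div_succ N (Nat.floor_pos.2 hB1)
    _ ≤ B * (2 * S.card / lam + 1) := by
      gcongr
      exact Nat.floor_le (zero_le_one.trans hB1)

-- The extra `1` on the left makes the recursion of `length_add_one_le_mul` multiplicative.
lemma length_add_one_le_factorial_mul_pow (h : IsReflectionSequence α S N v idx)
    (hα : ∀ i, ‖α i‖ = 1) (hR : IsLowerRieszBound α lam) (hS : 2 ≤ S.card) :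
    (N : ℝ) + 1 ≤ S.card.factorial * (4 / lam) ^ (S.card - 1) := by
  classical
  have hlam := hR.pos
  obtain ⟨c, hc⟩ : ∃ c, S.card = c + 2 := ⟨S.card - 2, by omega⟩
  obtain ⟨i₀, -⟩ : S.Nonempty := Finset.card_pos.1 (by omega)
  have hfour : 4 ≤ 4 / lam := by
    have hle := hR.le_norm_sq i₀
    rw [hα, one_pow] at hle
    rw [le_div_iff₀ hlam]
    linarith
  rw [hc, Nat.add_succ_sub_one]
  clear hS
  induction c generalizing S N v idx with
  | zero =>
    have hlen := h.length_le_of_card_eq_two hα hR hc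
    simp only [zero_add, Nat.factorial_two, Nat.cast_ofNat, pow_one]
    linarith
  | succ c ih =>
    have hrec := h.length_add_one_le_mul hα hR (Finset.card_pos.1 (by omega)) fun i hi M w jdx hw ↦
      ih hw (by rw [Finset.card_erase_of_mem hi, hc]; rfl)
    rw [hc] at hrec
    have hfactor : 2 * ((c + 3 : ℕ) : ℝ) / lam + 1 ≤ (c + 3 : ℕ) * (4 / lam) := by
      have hhalf : 2 * ((c + 3 : ℕ) : ℝ) / lam = (c + 3 : ℕ) * (4 / lam) / 2 := by ring
      have hcard : (1 : ℝ) ≤ (c + 3 : ℕ) := by exact_mod_cast (by omega : 1 ≤ c + 3)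
      rw [hhalf]
      nlinarith
    calc (N : ℝ) + 1
        ≤ (c + 2).factorial * (4 / lam) ^ (c + 1) * (2 * (c + 3 : ℕ) / lam + 1) := hrec
      _ ≤ (c + 2).factorial * (4 / lam) ^ (c + 1) * ((c + 3 : ℕ) * (4 / lam)) := by gcongr
      _ = (c + 3).factorial * (4 / lam) ^ (c + 2) := by
        rw [Nat.factorial_succ (c + 2), pow_succ _ (c + 1)]
        push_cast
        ring

end IsReflectionSequence

theorem billiard_reflections_le_factorial_mul_pow_general {α : ι → E} {lam : ℝ}
    (hR : IsLowerRieszBound α lam) (hα : ∀ i, ‖α i‖ = 1) {S : Finset ι} {N : ℕ} {v : ℕ → E}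
    {idx : ℕ → ι} (h : IsReflectionSequence α S N v idx) :
    (N : ℝ) ≤ S.card.factorial * (4 / lam) ^ (S.card - 1) := by
  obtain hS | hS := le_or_gt S.card 1
  · simpa [Nat.factorial_eq_one.2 hS, Nat.sub_eq_zero_of_le hS] using
      (h.length_le_card_of_card_le_one hα hS).trans hS
  · linarith [h.length_add_one_le_factorial_mul_pow hα hR hS]

/-- Any billiard trajectory in the polyhedral cone
`Q = {y : ∀ i, ⟪y, α i⟫ ≥ 0}` determined by linearly independent unit normals
`α 1, …, α n` experiences at most `n! * (4 / λ_min)^(n-1)` reflections, where `λ_min`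
is the smallest eigenvalue of the Gram matrix `G = (⟪α i, α j⟫)`.
The trajectory is 1-indexed: reflection points `p 1, …, p N`, unit velocities
`v 0, v 1, …, v N` and wall indices `idx 1, …, idx N`. -/
theorem billiard_reflections_le_factorial_mul_pow
    (n m N : ℕ) (α : Fin n → EuclideanSpace ℝ (Fin m))
    (hα : LinearIndependent ℝ α) (hunit : ∀ i, ‖α i‖ = 1)
    (G : Matrix (Fin n) (Fin n) ℝ) (hG : ∀ i j, G i j = ⟪α i, α j⟫)
    (lam : ℝ)
    (hEig : ∃ ξ : Fin n → ℝ, ξ ≠ 0 ∧ G.mulVec ξ = lam • ξ)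
    (hMin : ∀ (μ : ℝ) (ξ : Fin n → ℝ), ξ ≠ 0 → G.mulVec ξ = μ • ξ → lam ≤ μ)
    (p v : ℕ → EuclideanSpace ℝ (Fin m)) (idx : ℕ → Fin n) (t : ℕ → ℝ)
    (hv : ∀ k ≤ N, ‖v k‖ = 1)
    (hpQ : ∀ k, 1 ≤ k → k ≤ N → ∀ i, 0 ≤ ⟪p k, α i⟫)
    (hwall : ∀ k, 1 ≤ k → k ≤ N → ⟪p k, α (idx k)⟫ = 0)
    (happroach : ∀ k, 1 ≤ k → k ≤ N → ⟪v (k - 1), α (idx k)⟫ < 0)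
    (hreflect : ∀ k, 1 ≤ k → k ≤ N →
      v k = v (k - 1) - (2 * ⟪v (k - 1), α (idx k)⟫) • α (idx k))
    (ht : ∀ k, 1 ≤ k → k < N → 0 < t k ∧ p (k + 1) = p k + t k • v k) :
    (N : ℝ) ≤ (n.factorial : ℝ) * (4 / lam) ^ (n - 1) := by
  obtain rfl : G = Matrix.gram ℝ α := Matrix.ext hG
  simpa using billiard_reflections_le_factorial_mul_pow_general
    (isLowerRieszBound_of_isLeast_eigenvalue_gram hα hEig hMin) hunit (S := Finset.univ) (v := v)
    (idx := fun k ↦ idx (k + 1)) ⟨fun _ _ ↦ Finset.mem_univ _,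
      fun k hk ↦ happroach (k + 1) (by omega) hk, fun k hk ↦ hreflect (k + 1) (by omega) hk⟩
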